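/- Define H:[0,∞)→ℝ by H(a) := ∫_{ℝ^d} max(a, |z|)·(|z|² − d)·ζ(z) dz. Then H is infinitely differentiable on [0,∞) (one-sided at 0), with H'(a) = ∫_{|z| ≤ a} (|z|² − d) ζ(z) dz; moreover H(0) = ∫_{ℝ^d} |z| ζ(z) dz = √2·Γ(d/2+1/2)/Γ(d/2) > 0, H'(0) = 0, H'(a) < 0 for every a > 0 (so H is strictly decreasing on (0,∞)), and H(a) → 0 as a → +∞. -/

import Mathlib

open MeasureTheory Filter Set Real Topology
open scoped NNReal ENNReal

noncomputable section

/-- Euclidean space `ℝ^d`. -/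
abbrev EucSp (d : ℕ) := EuclideanSpace ℝ (Fin d)

/-- Standard Gaussian density `ζ(z) = (2π)^{−d/2} e^{−|z|²/2}` on `ℝ^d`. -/
def gauss (d : ℕ) (z : EucSp d) : ℝ := (2 * π) ^ (-(d:ℝ)/2) * Real.exp (-‖z‖^2/2)

/-- `C_ζ := ∫_{ℝ^d} |z| ζ(z) dz`. -/
def Cz (d : ℕ) : ℝ := ∫ z : EucSp d, ‖z‖ * gauss d z


def gk (k : ℕ) (r : ℝ) : ℝ := r ^ k * Real.exp (-r^2/2)

def cK (d : ℕ) : ℝ := d * ((volume : Measure (EucSp d)).real (Metric.ball 0 1) * (2 * π) ^ (-(d:ℝ)/2))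

lemma gk_cont (k : ℕ) : Continuous (gk k) := by unfold gk; fun_prop

lemma gk_contDiff (k : ℕ) : ContDiff ℝ (⊤ : ℕ∞) (gk k) := by unfold gk; fun_prop

lemma gk_integrable (k : ℕ) : Integrable (gk k) := by
  have h := integrable_rpow_mul_exp_neg_mul_sq (b := 1/2) (by norm_num) (s := k)
    (by have : (0:ℝ) ≤ k := Nat.cast_nonneg k
        linarith)
  refine h.congr (ae_of_all _ fun x => ?_)
  simp only [gk, Real.rpow_natCast]
  congr 2; ring

lemma gk_deriv (k : ℕ) (r : ℝ) :
    HasDerivAt (gk (k+1)) ((k+1) * gk k r - gk (k+2) r) r := by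
  have h1 : HasDerivAt (fun r : ℝ => -r^2/2) (-r) r := by
    have := ((hasDerivAt_pow 2 r).neg).div_const 2
    convert! this using 1
    simp; ring
  have := (hasDerivAt_pow (k+1) r).mul h1.exp
  unfold gk
  convert! this using 1
  push_cast
  simp; ring

lemma gk_tendsto (k : ℕ) : Tendsto (gk (k+1)) atTop (𝓝 0) :=
  tendsto_zero_of_hasDerivAt_of_integrableOn_Ioi (a := 0) (fun x _ => gk_deriv k x)
    (((gk_integrable k).const_mul _).sub (gk_integrable _)).integrableOn
    (gk_integrable _).integrableOn

lemma polar (d : ℕ) (hd : 0 < d) (f : ℝ → ℝ) :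
    ∫ z : EucSp d, f ‖z‖ * gauss d z = cK d * ∫ r in Ioi (0:ℝ), f r * gk (d-1) r := by
  haveI : Nonempty (Fin d) := ⟨⟨0, hd⟩⟩
  have h := integral_fun_norm_addHaar (volume : Measure (EucSp d))
    (fun r => f r * ((2 * π) ^ (-(d:ℝ)/2) * Real.exp (-r^2/2)))
  unfold gauss
  rw [h]
  simp only [finrank_euclideanSpace, Fintype.card_fin, nsmul_eq_mul, smul_eq_mul, cK, gk]
  rw [mul_assoc, mul_assoc]
  congr 2
  rw [← integral_const_mul]
  congr 1; ext r; ring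

lemma int_Iic (k : ℕ) (a : ℝ) :
    ∫ r in (0:ℝ)..a, (r^2 - ((k+1 : ℕ):ℝ)) * gk k r = - gk (k+1) a := by
  have h := intervalIntegral.integral_eq_sub_of_hasDerivAt (a := 0) (b := a)
    (f := fun r => - gk (k+1) r) (f' := fun r => (r^2 - ((k+1 : ℕ):ℝ)) * gk k r)
    (fun x _ => by
      convert! (gk_deriv k x).neg using 1
      simp only [gk]; push_cast; ring)
    (by apply Continuous.intervalIntegrable; have := gk_cont k; fun_prop)
  rw [h]; simp [gk]

lemma int_Ioi (k : ℕ) (a : ℝ) :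
    ∫ r in Ioi a, r * (r^2 - ((k+1 : ℕ):ℝ)) * gk k r = gk (k+2) a + ∫ r in Ioi a, gk (k+1) r := by
  have h := integral_Ioi_of_hasDerivAt_of_tendsto' (a := a) (m := 0)
    (f := gk (k+2)) (f' := fun r => ((k+1:ℕ)+1) * gk (k+1) r - gk (k+3) r)
    (fun x _ => gk_deriv (k+1) x)
    (((gk_integrable _).const_mul _).sub (gk_integrable _)).integrableOn (gk_tendsto _)
  have e : (fun r => r * (r^2 - ((k+1 : ℕ):ℝ)) * gk k r) =
    fun r => gk (k+1) r - (((k+1:ℕ)+1) * gk (k+1) r - gk (k+3) r) := by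
    ext r; simp only [gk]; push_cast; ring
  rw [e, integral_sub, h]
  · ring
  · exact (gk_integrable _).integrableOn
  · exact (((gk_integrable _).const_mul _).sub (gk_integrable _)).integrableOn

lemma H_radial (k : ℕ) (a : ℝ) (ha : 0 ≤ a) :
    ∫ r in Ioi (0:ℝ), (max a r * (r^2 - ((k+1 : ℕ):ℝ))) * gk k r = ∫ r in Ioi a, gk (k+1) r := by
  have e1 : ∫ r in (0:ℝ)..a, (max a r * (r^2 - ((k+1 : ℕ):ℝ))) * gk k r = - gk (k+2) a := by
    rw [show - gk (k+2) a = a * (- gk (k+1) a) by simp only [gk]; ring, ← int_Iic,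
      ← intervalIntegral.integral_const_mul]
    apply intervalIntegral.integral_congr
    intro r hr
    rw [uIcc_of_le ha] at hr
    simp only [max_eq_left hr.2]; ring
  have e2 : ∀ r ∈ Ioi a, r * (r^2 - ((k+1 : ℕ):ℝ)) * gk k r =
     (max a r * (r^2 - ((k+1 : ℕ):ℝ))) * gk k r := by
    intro r hr
    rw [max_eq_right (le_of_lt hr)]
  have hint : IntegrableOn (fun r => r * (r^2 - ((k+1 : ℕ):ℝ)) * gk k r) (Ioi a) := by
    have e : (fun r => r * (r^2 - ((k+1 : ℕ):ℝ)) * gk k r) =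
      fun r => gk (k+3) r - (k+1:ℕ) * gk (k+1) r := by
      ext r; simp only [gk]; push_cast; ring
    rw [e]
    exact ((gk_integrable _).sub ((gk_integrable _).const_mul _)).integrableOn
  rw [← intervalIntegral.integral_interval_add_Ioi' (b := a), e1,
    ← setIntegral_congr_fun measurableSet_Ioi e2, int_Ioi]
  · ring
  · apply Continuous.intervalIntegrable; have := gk_cont k; fun_prop
  · exact hint.congr_fun e2 measurableSet_Ioi

lemma cK_pos (d : ℕ) (hd : 0 < d) : 0 < cK d := by
  unfold cK
  have h1 : 0 < (volume : Measure (EucSp d)).real (Metric.ball 0 1) :=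
    ENNReal.toReal_pos (Metric.measure_ball_pos _ _ one_pos).ne' measure_ball_lt_top.ne
  have : (0:ℝ) < d := by exact_mod_cast hd
  positivity

lemma H_eq (d : ℕ) (hd : 0 < d) (a : ℝ) (ha : 0 ≤ a) :
    ∫ z : EucSp d, max a ‖z‖ * (‖z‖^2 - (d:ℝ)) * gauss d z = cK d * ∫ r in Ioi a, gk d r := by
  rw [polar d hd (fun r => max a r * (r^2 - (d:ℝ)))]
  obtain ⟨k, rfl⟩ := Nat.exists_eq_succ_of_ne_zero hd.ne'
  exact congrArg _ (H_radial k a ha)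

lemma H_eq' (d : ℕ) (hd : 0 < d) (a : ℝ) (ha : 0 ≤ a) :
    ∫ z : EucSp d, max a ‖z‖ * (‖z‖^2 - (d:ℝ)) * gauss d z =
      cK d * ((∫ r in Ioi (0:ℝ), gk d r) - ∫ r in (0:ℝ)..a, gk d r) := by
  rw [H_eq d hd a ha, ← intervalIntegral.integral_interval_add_Ioi (a := 0) (b := a)
    (gk_integrable d).integrableOn (gk_integrable d).integrableOn]
  ring

lemma D_eq (d : ℕ) (hd : 0 < d) (a : ℝ) (ha : 0 ≤ a) :
    ∫ z in {z : EucSp d | ‖z‖ ≤ a}, (‖z‖^2 - (d:ℝ)) * gauss d z = - (cK d * gk d a) := by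
  rw [← integral_indicator (measurableSet_le measurable_norm measurable_const)]
  have e : ({z : EucSp d | ‖z‖ ≤ a}.indicator fun z => (‖z‖^2 - (d:ℝ)) * gauss d z) =
    fun z => (fun r => (Iic a).indicator (fun r => r^2 - (d:ℝ)) r) ‖z‖ * gauss d z := by
    ext z
    by_cases h : ‖z‖ ≤ a <;> simp [indicator, h]
  rw [e, polar d hd]
  obtain ⟨k, rfl⟩ := Nat.exists_eq_succ_of_ne_zero hd.ne'
  have := int_Iic k a
  rw [← mul_neg]
  congr 1
  rw [Nat.succ_eq_add_one, ← this, intervalIntegral.integral_of_le ha, ← Ioi_inter_Iic,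
    ← setIntegral_indicator measurableSet_Iic]
  congr 1; ext r
  by_cases h : r ≤ a <;> simp [indicator, h]

lemma Cz_eq (d : ℕ) (hd : 0 < d) : Cz d = cK d * ∫ r in Ioi (0:ℝ), gk d r := by
  unfold Cz
  rw [polar d hd (fun r => r)]
  obtain ⟨k, rfl⟩ := Nat.exists_eq_succ_of_ne_zero hd.ne'
  congr 2; ext r; simp [gk]; ring

lemma Cz_val (d : ℕ) (hd : 0 < d) :
    Cz d = Real.sqrt 2 * (Real.Gamma ((d:ℝ)/2 + 1/2) / Real.Gamma ((d:ℝ)/2)) := by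
  have hd' : (0:ℝ) < d := by exact_mod_cast hd
  haveI : Nonempty (Fin d) := ⟨⟨0, hd⟩⟩
  have hI : ∫ r in Ioi (0:ℝ), gk d r =
      (1/2:ℝ) ^ (-((d:ℝ) + 1) / 2) * (1 / 2) * Gamma (((d:ℝ) + 1) / 2) := by
    rw [← integral_rpow_mul_exp_neg_mul_rpow (by norm_num) (by linarith) (by norm_num)]
    congr 1; ext r
    rw [Real.rpow_natCast, show (2:ℝ) = (2:ℕ) by norm_num, Real.rpow_natCast]
    simp only [gk]
    congr 2; push_cast; ring
  have hG : 0 < Gamma ((d:ℝ)/2) := Gamma_pos_of_pos (by positivity)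
  have hV : (volume : Measure (EucSp d)).real (Metric.ball 0 1) =
      √π ^ d / (d / 2 * Gamma ((d:ℝ) / 2)) := by
    rw [← Gamma_add_one (by positivity), Measure.real, EuclideanSpace.volume_ball]
    simp only [Fintype.card_fin, ENNReal.ofReal_one, one_pow, one_mul]
    apply ENNReal.toReal_ofReal
    have := Gamma_pos_of_pos (show (0:ℝ) < d/2 + 1 by positivity)
    positivity
  have hp : √π ^ d = π ^ ((d:ℝ)/2) := by
    rw [sqrt_eq_rpow, ← Real.rpow_natCast, ← Real.rpow_mul pi_pos.le]; congr 1; ring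
  have h2 : (1/2:ℝ) ^ (-((d:ℝ) + 1) / 2) = 2 ^ ((d:ℝ)/2) * √2 := by
    rw [one_div, Real.inv_rpow (by norm_num), ← Real.rpow_neg (by norm_num), sqrt_eq_rpow,
      ← Real.rpow_add (by norm_num)]
    congr 1; ring
  have h3 : (2 * π) ^ (-(d:ℝ)/2) = (2 ^ ((d:ℝ)/2))⁻¹ * (π ^ ((d:ℝ)/2))⁻¹ := by
    rw [neg_div, Real.rpow_neg (by positivity), Real.mul_rpow (by norm_num) pi_pos.le, mul_inv]
  have p1 : (0:ℝ) < 2 ^ ((d:ℝ)/2) := by positivity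
  have p2 : (0:ℝ) < π ^ ((d:ℝ)/2) := by positivity
  rw [Cz_eq d hd, hI, cK, hV, hp, h2, h3, show ((d:ℝ) + 1) / 2 = (d:ℝ)/2 + 1/2 by ring]
  field_simp

/-- The function `H(a) := ∫ max(a,|z|)(|z|²−d) ζ(z) dz` is infinitely
differentiable on `[0,∞)` (one-sided at `0`), with `H'(a) = ∫_{|z|≤a} (|z|²−d) ζ(z) dz`;
moreover `H(0) = ∫ |z| ζ(z) dz = √2 Γ(d/2+1/2)/Γ(d/2) > 0`, `H'(0) = 0`, `H'(a) < 0` for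
every `a > 0` (so `H` is strictly decreasing on `(0,∞)`), and `H(a) → 0` as `a → +∞`. -/
theorem H_strictly_decreasing (d : ℕ) (hd : 0 < d) :
    ContDiffOn ℝ (⊤ : ℕ∞) (fun a : ℝ => ∫ z : EucSp d, max a ‖z‖ * (‖z‖^2 - (d:ℝ)) * gauss d z)
      (Set.Ici 0) ∧
    (∀ a : ℝ, 0 ≤ a →
      HasDerivWithinAt
        (fun a : ℝ => ∫ z : EucSp d, max a ‖z‖ * (‖z‖^2 - (d:ℝ)) * gauss d z)
        (∫ z in {z : EucSp d | ‖z‖ ≤ a}, (‖z‖^2 - (d:ℝ)) * gauss d z)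
        (Set.Ici 0) a) ∧
    (∫ z : EucSp d, max 0 ‖z‖ * (‖z‖^2 - (d:ℝ)) * gauss d z) = Cz d ∧
    Cz d = Real.sqrt 2 * (Real.Gamma ((d:ℝ)/2 + 1/2) / Real.Gamma ((d:ℝ)/2)) ∧
    0 < Cz d ∧
    HasDerivWithinAt
      (fun a : ℝ => ∫ z : EucSp d, max a ‖z‖ * (‖z‖^2 - (d:ℝ)) * gauss d z)
      0 (Set.Ici 0) 0 ∧
    (∀ a : ℝ, 0 < a → (∫ z in {z : EucSp d | ‖z‖ ≤ a}, (‖z‖^2 - (d:ℝ)) * gauss d z) < 0) ∧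
    StrictAntiOn (fun a : ℝ => ∫ z : EucSp d, max a ‖z‖ * (‖z‖^2 - (d:ℝ)) * gauss d z)
      (Set.Ioi 0) ∧
    Tendsto (fun a : ℝ => ∫ z : EucSp d, max a ‖z‖ * (‖z‖^2 - (d:ℝ)) * gauss d z)
      atTop (nhds 0) := by
  have hc := cK_pos d hd
  have hder : ∀ a : ℝ, HasDerivAt (fun a : ℝ =>
      cK d * ((∫ r in Ioi (0:ℝ), gk d r) - ∫ r in (0:ℝ)..a, gk d r)) (-(cK d * gk d a)) a := by
    intro a
    have h := (intervalIntegral.integral_hasDerivAt_right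
      ((gk_cont d).intervalIntegrable 0 a) ((gk_cont d).stronglyMeasurableAtFilter _ _)
      (gk_cont d).continuousAt)
    convert! (h.const_sub (∫ r in Ioi (0:ℝ), gk d r)).const_mul (cK d) using 1
    ring
  have hderH : ∀ a : ℝ, 0 ≤ a → HasDerivWithinAt
      (fun a : ℝ => ∫ z : EucSp d, max a ‖z‖ * (‖z‖^2 - (d:ℝ)) * gauss d z)
      (-(cK d * gk d a)) (Set.Ici 0) a := fun a ha =>
    (hder a).hasDerivWithinAt.congr (fun x hx => H_eq' d hd x hx) (H_eq' d hd a ha)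
  have hgpos : ∀ a : ℝ, 0 < a → 0 < gk d a := fun a ha => by unfold gk; positivity
  have hCv := Cz_val d hd
  have hd' : (0:ℝ) < d := by exact_mod_cast hd
  refine ⟨?_, ?_, ?_, hCv, ?_, ?_, ?_, ?_, ?_⟩
  · refine ContDiffOn.congr (ContDiff.contDiffOn ?_) (fun x hx => H_eq' d hd x hx)
    refine contDiff_infty_iff_deriv.2 ⟨fun a => (hder a).differentiableAt, ?_⟩
    rw [show deriv _ = _ from funext fun a => (hder a).deriv]
    exact (contDiff_const.mul (gk_contDiff d)).neg
  · intro a ha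
    rw [D_eq d hd a ha]
    exact hderH a ha
  · rw [H_eq d hd 0 le_rfl, Cz_eq d hd]
  · rw [hCv]
    have h1 := Gamma_pos_of_pos (show (0:ℝ) < d/2 by positivity)
    have h2 := Gamma_pos_of_pos (show (0:ℝ) < d/2 + 1/2 by positivity)
    positivity
  · have := hderH 0 le_rfl
    simpa [gk, hd.ne'] using this
  · intro a ha
    rw [D_eq d hd a ha.le]
    have := hgpos a ha
    have := mul_pos hc this
    linarith
  · have : StrictAntiOn (fun a : ℝ =>
        cK d * ((∫ r in Ioi (0:ℝ), gk d r) - ∫ r in (0:ℝ)..a, gk d r)) (Set.Ioi 0) := by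
      apply strictAntiOn_of_deriv_neg (convex_Ioi 0)
      · exact fun a _ => (hder a).continuousAt.continuousWithinAt
      · intro a ha
        rw [interior_Ioi] at ha
        rw [(hder a).deriv]
        have := mul_pos hc (hgpos a ha)
        linarith
    intro x hx y hy hxy
    have h := this hx hy hxy
    simp only at h ⊢
    rwa [H_eq' d hd x (le_of_lt hx), H_eq' d hd y (le_of_lt hy)]
  · have h := intervalIntegral_tendsto_integral_Ioi (0:ℝ) (gk_integrable d).integrableOn
      (tendsto_id (α := ℝ) (x := atTop))
    have h' := (h.const_sub (∫ r in Ioi (0:ℝ), gk d r)).const_mul (cK d)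
    rw [sub_self, mul_zero] at h'
    refine h'.congr' ?_
    filter_upwards [eventually_ge_atTop (0:ℝ)] with a ha
    exact (H_eq' d hd a ha).symm

end
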